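/- Existence form of the aspect-ratio-free hopset theorem (Theorem C.1, without the computational complexity claims): there is an absolute constant c > 0 with the following property. Let V be a finite set with n = |V| ≥ 2, and let w : V → V → [0,∞] be a weight function with strictly positive off-diagonal values such that d_w(u,v) < ∞ for all u,v (G is connected). Let 0 < ε < 1/2 be real, κ ≥ 2 an integer, and 0 < ρ < 1/2 real with κρ ≥ 1, and set ℓ = ⌊log₂(κρ)⌋ + ⌈(κ+1)/(κρ)⌉ − 1 and β = ⌈(c · (log₂ n)² · (log₂(κρ) + 1/ρ) / ε)^ℓ⌉. Then there exists a weight function w_H on V whose set of pairs with finite value (the hopset edges) has cardinality at most c · n^{1+1/κ} · log₂ n, such that, with w' the pointwise minimum of w and w_H, every pair u, v ∈ V satisfies d_w(u,v) ≤ d_{w'}^{(β)}(u,v) ≤ (1+ε) · d_w(u,v). In particular, both the size of the hopset and its hopbound β are independent of the aspect ratio of the graph. -/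

import Mathlib

open scoped ENNReal BigOperators

/-- The `t`-hop-bounded distance for a weight function `w` on `V`: the infimum,
over all sequences `u = x 0, x 1, ..., x m = v` with `m <= t`, of
the total weight `Sum_{j<m} w (x j) (x (j+1))`. -/
noncomputable def hopDist {V : Type*} (w : V → V → ℝ≥0∞) (t : ℕ) (u v : V) : ℝ≥0∞ :=
  ⨅ (m : ℕ) (_ : m ≤ t) (x : ℕ → V) (_ : x 0 = u) (_ : x m = v),
    ∑ j ∈ Finset.range m, w (x j) (x (j + 1))

/-- The distance for a weight function `w`: the infimum of hop-bounded distances. -/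
noncomputable def graphDist {V : Type*} (w : V → V → ℝ≥0∞) (u v : V) : ℝ≥0∞ :=
  ⨅ t : ℕ, hopDist w t u v

/-!
Sample a hierarchy of levels `V = A 0, A 1, …, A ℓ`, in the manner of Thorup–Zwick and Huang–Pettie,
where level `i + 1` keeps each vertex of level `i` with probability about `n ^ (-2 ^ i / κ)`, and
join every vertex of `A i` to the vertices of `A i` preceding its nearest vertex of `A (i + 1)`, its
pivot, and to the pivot itself. Two vertices of `A i` are then joined by an edge unless the pivot of
the first is no farther from it than the second. In expectation each level costs
`O(n ^ (1 + 1 / κ))` edges and the levels die out after `O(log n)` steps, so the aspect ratio never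
enters; when `κ + 1 ≤ 2 ^ (ℓ + 1)`, the last level is small enough to be turned into a clique.

For the hopbound, cut a shortest walk into `K` segments and treat each of them recursively with the
edges of the lower levels. If some segments fail, then the first one starts close to a vertex `z₁`
of the current level, and the last one ends close to a vertex `z₃` of it. Either `z₁ z₃` is an edge,
and the detour over it costs an additive `8 / K` fraction of the walk, or a pivot in the next level
is nearby. With `K ≈ 8 ℓ / ε` the errors of all levels sum up to a fraction `ε`.
-/

section Walks

variable {V : Type*} {w w' : V → V → ℝ≥0∞} {u v y : V} {s t m k : ℕ} {D R : ℝ≥0∞}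

/-- `IsWalk w u v m D` says that some sequence of `m` steps leads from `u` to `v` and has total
`w`-weight `D`. It is the inductive form of the sequences over which `hopDist` minimises, with the
weight as an index so that walks can be split and concatenated without naming their vertices. -/
inductive IsWalk (w : V → V → ℝ≥0∞) : V → V → ℕ → ℝ≥0∞ → Prop
  | nil (u : V) : IsWalk w u u 0 0
  | cons (u : V) {v y : V} {m : ℕ} {D : ℝ≥0∞} (tail : IsWalk w v y m D) :
      IsWalk w u y (m + 1) (w u v + D)

theorem isWalk_sum (w : V → V → ℝ≥0∞) (x : ℕ → V) (m : ℕ) :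
    IsWalk w (x 0) (x m) m (∑ j ∈ Finset.range m, w (x j) (x (j + 1))) := by
  induction m generalizing x with
  | zero => exact .nil (x 0)
  | succ m ih =>
    rw [Finset.sum_range_succ', add_comm (Finset.sum _ _)]
    exact .cons (x 0) (ih fun j => x (j + 1))

theorem IsWalk.exists_seq (walk : IsWalk w u v m D) :
    ∃ x : ℕ → V, x 0 = u ∧ x m = v ∧ ∑ j ∈ Finset.range m, w (x j) (x (j + 1)) = D := by
  induction walk with
  | nil u => exact ⟨fun _ => u, rfl, rfl, rfl⟩
  | cons u _ ih =>
    obtain ⟨x, rfl, rfl, rfl⟩ := ih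
    refine ⟨fun j => j.casesOn u x, rfl, rfl, ?_⟩
    exact (Finset.sum_range_succ' _ _).trans (add_comm _ _)

theorem IsWalk.append (walk : IsWalk w u v m D) (walk' : IsWalk w v y k R) :
    IsWalk w u y (m + k) (D + R) := by
  induction walk with
  | nil => simpa using walk'
  | cons u _ ih =>
    rw [add_assoc (w _ _), Nat.add_right_comm]
    exact .cons u (ih walk')

theorem isWalk_edge (w : V → V → ℝ≥0∞) (u v : V) : IsWalk w u v 1 (w u v) := by
  simpa using IsWalk.cons (w := w) u (.nil v)

theorem IsWalk.reverse (hs : ∀ a b, w a b = w b a) (walk : IsWalk w u v m D) :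
    IsWalk w v u m D := by
  induction walk with
  | nil u => exact .nil u
  | @cons u b _ _ _ _ ih =>
    rw [hs u b, add_comm (w b u)]
    exact ih.append (isWalk_edge w b u)

theorem IsWalk.exists_split (walk : IsWalk w u y m D) (τ : ℝ≥0∞) :
    D ≤ τ ∨ ∃ v v' j k L R, IsWalk w u v j L ∧ IsWalk w v' y k R ∧
      L ≤ τ ∧ τ ≤ L + w v v' ∧ L + w v v' + R = D := by
  induction walk generalizing τ with
  | nil => exact .inl zero_le
  | @cons a b y _ E tail ih =>
    rcases le_total τ (w a b) with hτ | hτ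
    · exact .inr ⟨a, b, _, _, 0, E, .nil a, tail, zero_le, by simpa using hτ, by simp⟩
    obtain ⟨σ, rfl⟩ := exists_add_of_le hτ
    rcases ih σ with hE | ⟨v, v', j, k, L, R, left, right, hL, hσ, rfl⟩
    · exact .inl (by gcongr)
    · refine .inr ⟨v, v', _, k, w a b + L, R, .cons a left, right, by gcongr, ?_, by ring⟩
      rw [add_assoc]
      gcongr

theorem hopDist_eq_iInf_isWalk (w : V → V → ℝ≥0∞) (t : ℕ) (u v : V) :
    hopDist w t u v = ⨅ (m : ℕ) (_ : m ≤ t) (D : ℝ≥0∞) (_ : IsWalk w u v m D), D := by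
  refine le_antisymm ?_ ?_
  · refine le_iInf₂ fun m hm => le_iInf₂ fun D walk => ?_
    obtain ⟨x, hu, hv, rfl⟩ := walk.exists_seq
    exact iInf₂_le_of_le m hm (iInf_le_of_le x (iInf₂_le hu hv))
  · refine le_iInf₂ fun m hm => le_iInf fun x => le_iInf₂ fun hu hv => ?_
    subst hu hv
    exact iInf₂_le_of_le m hm (iInf₂_le _ (isWalk_sum w x m))

theorem IsWalk.hopDist_le (walk : IsWalk w u v m D) (hm : m ≤ t) : hopDist w t u v ≤ D := by
  rw [hopDist_eq_iInf_isWalk]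
  exact iInf₂_le_of_le m hm (iInf₂_le D walk)

theorem le_hopDist {c : ℝ≥0∞} (h : ∀ m ≤ t, ∀ D, IsWalk w u v m D → c ≤ D) :
    c ≤ hopDist w t u v := by
  rw [hopDist_eq_iInf_isWalk]
  exact le_iInf₂ fun m hm => le_iInf₂ (h m hm)

theorem hopDist_anti (hst : s ≤ t) (u v : V) : hopDist w t u v ≤ hopDist w s u v :=
  le_hopDist fun _ hm _ walk => walk.hopDist_le (hm.trans hst)

theorem hopDist_one_le (w : V → V → ℝ≥0∞) (u v : V) : hopDist w 1 u v ≤ w u v :=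
  (isWalk_edge w u v).hopDist_le le_rfl

theorem hopDist_add_le (w : V → V → ℝ≥0∞) (s t : ℕ) (u v y : V) :
    hopDist w (s + t) u y ≤ hopDist w s u v + hopDist w t v y := by
  simp only [hopDist_eq_iInf_isWalk w s, hopDist_eq_iInf_isWalk w t, ENNReal.iInf_add,
    ENNReal.add_iInf, le_iInf_iff]
  intro k hk R right j hj L left
  exact (left.append right).hopDist_le (by lia)

theorem hopDist_comm (hs : ∀ a b, w a b = w b a) (t : ℕ) (u v : V) :
    hopDist w t u v = hopDist w t v u :=
  le_antisymm (le_hopDist fun _ hm _ walk => (walk.reverse hs).hopDist_le hm)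
    (le_hopDist fun _ hm _ walk => (walk.reverse hs).hopDist_le hm)

theorem graphDist_le_hopDist (w : V → V → ℝ≥0∞) (t : ℕ) (u v : V) :
    graphDist w u v ≤ hopDist w t u v :=
  iInf_le _ t

theorem IsWalk.graphDist_le (walk : IsWalk w u v m D) : graphDist w u v ≤ D :=
  (graphDist_le_hopDist w m u v).trans (walk.hopDist_le le_rfl)

theorem graphDist_le_weight (w : V → V → ℝ≥0∞) (u v : V) : graphDist w u v ≤ w u v :=
  (isWalk_edge w u v).graphDist_le

theorem graphDist_triangle (w : V → V → ℝ≥0∞) (u v y : V) :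
    graphDist w u y ≤ graphDist w u v + graphDist w v y := by
  simp only [graphDist.eq_def w u v, graphDist.eq_def w v y, ENNReal.iInf_add, ENNReal.add_iInf,
    le_iInf_iff]
  exact fun t s => (graphDist_le_hopDist w _ u y).trans (hopDist_add_le w s t u v y)

theorem graphDist_comm (hs : ∀ a b, w a b = w b a) (u v : V) :
    graphDist w u v = graphDist w v u :=
  iInf_congr fun t => hopDist_comm hs t u v

theorem le_mul_graphDist {α c : ℝ≥0∞} (hα₀ : α ≠ 0) (hα : α ≠ ⊤)
    (h : ∀ m D, IsWalk w u v m D → c ≤ α * D) : c ≤ α * graphDist w u v := by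
  rw [← ENNReal.div_le_iff' hα₀ hα]
  refine le_iInf fun t => le_hopDist fun m _ D walk => ?_
  rw [ENNReal.div_le_iff' hα₀ hα]
  exact h m D walk

theorem graphDist_le_hopDist_of_le (h : ∀ a b, graphDist w a b ≤ w' a b) (t : ℕ) (u v : V) :
    graphDist w u v ≤ hopDist w' t u v := by
  refine le_hopDist fun _ _ _ walk => ?_
  clear * - walk h
  induction walk with
  | nil u => exact (IsWalk.nil u).graphDist_le
  | @cons a b y _ _ _ ih => exact (graphDist_triangle w a b y).trans (add_le_add (h a b) ih)

end Walks

/-- `PivotCover d R A B`: every pair `u, v` of level `A` is either linked by `R`, or `u` is linked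
to a pivot in the next level `B` which is no farther from `u` than `v` is. -/
def PivotCover {V ι : Type*} [LE ι] (d : V → V → ι) (R : V → V → Prop) (A B : Set V) : Prop :=
  ∀ u ∈ A, ∀ v ∈ A, R u v ∨ ∃ p ∈ B, R u p ∧ d u p ≤ d u v

theorem PivotCover.mono {V ι : Type*} [LE ι] {d : V → V → ι} {R R' : V → V → Prop} {A B : Set V}
    (hAB : PivotCover d R A B) (hR : ∀ u v, R u v → R' u v) : PivotCover d R' A B :=
  fun u hu v hv => (hAB u hu v hv).imp (hR u v) fun ⟨p, hp, hup, hle⟩ => ⟨p, hp, hR u p hup, hle⟩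

section Levels

variable {V : Type*} {w w' : V → V → ℝ≥0∞} {A B : Set V} {u y : V} {h m N : ℕ} {α τ D : ℝ≥0∞}

/-- `w'` arises from `w` by adding undirected edges, none of them shorter than the distance it
spans. -/
structure IsAugmentation (w w' : V → V → ℝ≥0∞) : Prop where
  comm : ∀ a b, w' a b = w' b a
  graphDist_le : ∀ a b, graphDist w a b ≤ w' a b
  le_weight : ∀ a b, w' a b ≤ w a b

/-- The induction hypothesis of the hopset analysis: every `w`-walk is either `α`-approximated by
`h` hops of `w'`, or these `h` hops lead from its starting point to a vertex of `A` within twice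
the length of the walk. -/
def ReachesOrPivots (w w' : V → V → ℝ≥0∞) (A : Set V) (h : ℕ) (α : ℝ≥0∞) : Prop :=
  ∀ ⦃u v m D⦄, IsWalk w u v m D →
    hopDist w' h u v ≤ α * D ∨ ∃ z ∈ A, hopDist w' h u z ≤ 2 * D

theorem ReachesOrPivots.mono {h' : ℕ} (hA : ReachesOrPivots w w' A h α) (hh : h ≤ h') :
    ReachesOrPivots w w' A h' α :=
  fun u v _ _ walk => (hA walk).imp (hopDist_anti hh u v).trans
    fun ⟨z, hz, huz⟩ => ⟨z, hz, (hopDist_anti hh u z).trans huz⟩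

/-- A walk of length `D` from `u` to `y` splits at a vertex `x` which lies within `2 * τ` of a pivot
in `A`, such that `w'` approximates the part before `x`. The number `N` budgets the segments of
length `τ`: `N₁` of them are spent before `x`, and `N₂ + 1` suffice for the part after `x`. -/
def PivotAfterPrefix (w w' : V → V → ℝ≥0∞) (A : Set V) (h : ℕ) (α τ : ℝ≥0∞) (N : ℕ) (u y : V)
    (D : ℝ≥0∞) : Prop :=
  ∃ N₁ N₂ x k R M, N₁ + N₂ = N ∧ R + M = D ∧ IsWalk w x y k M ∧ M ≤ (N₂ + 1) * τ ∧
    hopDist w' (N₁ * (h + 1)) u x ≤ α * R ∧ ∃ z ∈ A, hopDist w' h x z ≤ 2 * τ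

theorem ReachesOrPivots.reaches_segment_or_pivotAfterPrefix (hA : ReachesOrPivots w w' A h α)
    (walk : IsWalk w u y m D) (hD : D ≤ (N + 1) * τ) {v : V} {k : ℕ} {L : ℝ≥0∞}
    (segment : IsWalk w u v k L) (hL : L ≤ τ) :
    hopDist w' h u v ≤ α * L ∨ PivotAfterPrefix w w' A h α τ N u y D :=
  (hA segment).imp_right fun ⟨z, hz, huz⟩ =>
    ⟨0, N, u, m, 0, D, zero_add N, zero_add D, walk, hD,
      ((IsWalk.nil u).hopDist_le (Nat.zero_le _)).trans zero_le, z, hz, huz.trans (by gcongr)⟩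

theorem PivotAfterPrefix.prepend {v : V} {L : ℝ≥0∞} (hv : PivotAfterPrefix w w' A h α τ N v y D)
    (huv : hopDist w' (h + 1) u v ≤ α * L) :
    PivotAfterPrefix w w' A h α τ (N + 1) u y (L + D) := by
  obtain ⟨N₁, N₂, x, k, R, M, hN, rfl, walk, hM, hvx, hx⟩ := hv
  refine ⟨N₁ + 1, N₂, x, k, L + R, M, by lia, add_assoc L R M, walk, hM, ?_, hx⟩
  calc hopDist w' ((N₁ + 1) * (h + 1)) u x
      = hopDist w' ((h + 1) + N₁ * (h + 1)) u x := by congr 1; ring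
    _ ≤ hopDist w' (h + 1) u v + hopDist w' (N₁ * (h + 1)) v x := hopDist_add_le w' _ _ u v x
    _ ≤ α * L + α * R := add_le_add huv hvx
    _ = α * (L + R) := (mul_add α L R).symm

-- Cut the walk into segments of length at most `τ` separated by single edges; the first segment
-- which `w'` does not `α`-approximate starts close to a pivot.
theorem ReachesOrPivots.reaches_or_pivotAfterPrefix (hA : ReachesOrPivots w w' A h α)
    (hw : ∀ a b, w' a b ≤ w a b) (hα : 1 ≤ α) (hτ : τ ≠ ⊤) (walk : IsWalk w u y m D)
    (hD : D ≤ (N + 1) * τ) :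
    hopDist w' ((N + 1) * (h + 1)) u y ≤ α * D ∨ PivotAfterPrefix w w' A h α τ N u y D := by
  induction N generalizing u m D with
  | zero =>
    refine (hA.reaches_segment_or_pivotAfterPrefix walk hD walk (by simpa using hD)).imp_left ?_
    exact (hopDist_anti (by lia) u y).trans
  | succ N ih =>
    rcases walk.exists_split τ with hDτ | ⟨v, v', j, k, L, R, left, right, hL, hτL, rfl⟩
    · refine (hA.reaches_segment_or_pivotAfterPrefix walk hD walk hDτ).imp_left ?_
      exact (hopDist_anti (by nlinarith) u y).trans
    rcases hA.reaches_segment_or_pivotAfterPrefix walk hD left hL with hgood | hpivot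
    swap
    · exact .inr hpivot
    have huv' : hopDist w' (h + 1) u v' ≤ α * (L + w v v') :=
      calc hopDist w' (h + 1) u v' ≤ hopDist w' h u v + hopDist w' 1 v v' :=
            hopDist_add_le w' h 1 u v v'
        _ ≤ α * L + α * w v v' := by
            gcongr
            exact (hopDist_one_le w' v v').trans ((hw v v').trans (le_mul_of_one_le_left' hα))
        _ = α * (L + w v v') := (mul_add α L _).symm
    have hR : R ≤ (N + 1) * τ := by
      refine (ENNReal.add_le_add_iff_left hτ).1 ?_
      calc τ + R ≤ L + w v v' + R := by gcongr
        _ ≤ τ + (N + 1) * τ := hD.trans_eq (by push_cast; ring)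
    refine (ih right hR).imp (fun hv'y => ?_) fun hv' => hv'.prepend huv'
    calc hopDist w' ((N + 1 + 1) * (h + 1)) u y
        = hopDist w' ((h + 1) + (N + 1) * (h + 1)) u y := by congr 1; ring
      _ ≤ hopDist w' (h + 1) u v' + hopDist w' ((N + 1) * (h + 1)) v' y :=
          hopDist_add_le w' _ _ u v' y
      _ ≤ α * (L + w v v') + α * R := add_le_add huv' hv'y
      _ = α * (L + w v v' + R) := (mul_add α _ R).symm

/-- A walk of length `D` from `u` to `y` whose outer parts, of lengths `R₁` and `R₃`, are
approximated by `w'` up to pivots `z₁, z₃` in `A`, and whose middle part has length `M`. -/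
def PivotPair (w w' : V → V → ℝ≥0∞) (A : Set V) (h : ℕ) (α τ : ℝ≥0∞) (N : ℕ) (u y : V)
    (D : ℝ≥0∞) : Prop :=
  ∃ N₁ N₃ R₁ M R₃, ∃ z₁ ∈ A, ∃ z₃ ∈ A, N₁ + N₃ ≤ N ∧ R₁ + M + R₃ = D ∧
    hopDist w' (N₁ * (h + 1) + h) u z₁ ≤ α * R₁ + 2 * τ ∧
    hopDist w' (N₃ * (h + 1) + h) y z₃ ≤ α * R₃ + 2 * τ ∧
    graphDist w z₁ z₃ ≤ M + 4 * τ

-- Apply the one-sided statement to the walk and then, reversed, to what remains of it.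
theorem ReachesOrPivots.reaches_or_pivotPair (hA : ReachesOrPivots w w' A h α)
    (hs : ∀ a b, w a b = w b a) (hw : IsAugmentation w w') (hα : 1 ≤ α) (hτ : τ ≠ ⊤)
    (walk : IsWalk w u y m D) (hD : D ≤ (N + 1) * τ) :
    hopDist w' ((N + 1) * (h + 1)) u y ≤ α * D ∨ PivotPair w w' A h α τ N u y D := by
  rcases hA.reaches_or_pivotAfterPrefix hw.le_weight hα hτ walk hD with
    hgood | ⟨N₁, N₂, x₁, k, R₁, M', rfl, rfl, rest, hM', hux₁, z₁, hz₁, hxz₁⟩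
  · exact .inl hgood
  rcases hA.reaches_or_pivotAfterPrefix hw.le_weight hα hτ (rest.reverse hs) hM' with
    hgood | ⟨N₃, N₄, x₃, k', R₃, M, rfl, rfl, middle, -, hyx₃, z₃, hz₃, hxz₃⟩
  · left
    calc hopDist w' ((N₁ + N₂ + 1) * (h + 1)) u y
        = hopDist w' (N₁ * (h + 1) + (N₂ + 1) * (h + 1)) u y := by congr 1; ring
      _ ≤ hopDist w' (N₁ * (h + 1)) u x₁ + hopDist w' ((N₂ + 1) * (h + 1)) x₁ y :=
          hopDist_add_le w' _ _ u x₁ y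
      _ ≤ α * R₁ + α * M' := add_le_add hux₁ (by rwa [hopDist_comm hw.comm])
      _ = α * (R₁ + M') := (mul_add α R₁ M').symm
  · refine .inr ⟨N₁, N₃, R₁, M, R₃, z₁, hz₁, z₃, hz₃, by lia, by ring,
      (hopDist_add_le w' _ _ u x₁ z₁).trans (add_le_add hux₁ hxz₁),
      (hopDist_add_le w' _ _ y x₃ z₃).trans (add_le_add hyx₃ hxz₃), ?_⟩
    have graphDist_pivot_le {x z} (hxz : hopDist w' h x z ≤ 2 * τ) : graphDist w x z ≤ 2 * τ :=
      (graphDist_le_hopDist_of_le hw.graphDist_le h x z).trans hxz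
    calc graphDist w z₁ z₃ ≤ graphDist w z₁ x₁ + (graphDist w x₁ x₃ + graphDist w x₃ z₃) :=
          (graphDist_triangle w z₁ x₁ z₃).trans (by gcongr; exact graphDist_triangle w x₁ x₃ z₃)
      _ ≤ 2 * τ + (M + 2 * τ) := by
          gcongr
          · rw [graphDist_comm hs]; exact graphDist_pivot_le hxz₁
          · exact (middle.reverse hs).graphDist_le
          · exact graphDist_pivot_le hxz₃
      _ = M + 4 * τ := by ring

theorem PivotPair.reaches_or_pivots (huy : PivotPair w w' A h α τ N u y D)
    (hw : ∀ a b, w' a b = w' b a) (hα : 1 ≤ α)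
    (hAB : PivotCover (graphDist w) (fun a b => w' a b ≤ graphDist w a b) A B) :
    hopDist w' ((N + 2) * (h + 1)) u y ≤ α * D + 8 * τ ∨
      ∃ p ∈ B, hopDist w' ((N + 2) * (h + 1)) u p ≤ α * D + 6 * τ := by
  obtain ⟨N₁, N₃, R₁, M, R₃, z₁, hz₁, z₃, hz₃, hN, rfl, huz₁, hyz₃, hz₁z₃⟩ := huy
  have hhops : N₁ * (h + 1) + N₃ * (h + 1) ≤ N * (h + 1) := by
    rw [← add_mul]; exact Nat.mul_le_mul_right _ hN
  have hM : M + 4 * τ ≤ α * M + 4 * τ := by gcongr; exact le_mul_of_one_le_left' hα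
  rcases hAB z₁ hz₁ z₃ hz₃ with hlink | ⟨p, hp, hlink, hle⟩
  · left
    calc hopDist w' ((N + 2) * (h + 1)) u y
        ≤ hopDist w' ((N₁ * (h + 1) + h) + (1 + (N₃ * (h + 1) + h))) u y :=
          hopDist_anti (by linarith) u y
      _ ≤ hopDist w' (N₁ * (h + 1) + h) u z₁ +
            (hopDist w' 1 z₁ z₃ + hopDist w' (N₃ * (h + 1) + h) z₃ y) :=
          (hopDist_add_le w' _ _ u z₁ y).trans (by gcongr; exact hopDist_add_le w' _ _ z₁ z₃ y)
      _ ≤ (α * R₁ + 2 * τ) + ((α * M + 4 * τ) + (α * R₃ + 2 * τ)) := by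
          gcongr
          · exact (hopDist_one_le w' z₁ z₃).trans (hlink.trans (hz₁z₃.trans hM))
          · rwa [hopDist_comm hw]
      _ = α * (R₁ + M + R₃) + 8 * τ := by ring
  · refine .inr ⟨p, hp, ?_⟩
    calc hopDist w' ((N + 2) * (h + 1)) u p
        ≤ hopDist w' ((N₁ * (h + 1) + h) + 1) u p :=
          hopDist_anti (by linarith [Nat.zero_le (N₃ * (h + 1))]) u p
      _ ≤ hopDist w' (N₁ * (h + 1) + h) u z₁ + hopDist w' 1 z₁ p := hopDist_add_le w' _ _ u z₁ p
      _ ≤ (α * R₁ + 2 * τ) + (α * M + 4 * τ) := by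
          gcongr
          exact (hopDist_one_le w' z₁ p).trans (hlink.trans (hle.trans (hz₁z₃.trans hM)))
      _ = α * (R₁ + M) + 6 * τ := by ring
      _ ≤ α * (R₁ + M + R₃) + 6 * τ := by gcongr α * ?_ + _; exact le_self_add

theorem ReachesOrPivots.succ (hA : ReachesOrPivots w w' A h α) (hs : ∀ a b, w a b = w b a)
    (hw : IsAugmentation w w') (hα : 1 ≤ α)
    (hAB : PivotCover (graphDist w) (fun a b => w' a b ≤ graphDist w a b) A B) {K : ℕ}
    (hK : K ≠ 0) (hαK : α + 6 / K ≤ 2) :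
    ReachesOrPivots w w' B ((K + 1) * (h + 1)) (α + 8 / K) := by
  intro u v m D walk
  by_cases hD : D = ⊤
  · left
    rw [hD, ENNReal.mul_top (by simp [(zero_lt_one.trans_le hα).ne'])]
    exact le_top
  obtain ⟨N, rfl⟩ := Nat.exists_eq_succ_of_ne_zero hK
  have hK₀ : ((N + 1 : ℕ) : ℝ≥0∞) ≠ 0 := Nat.cast_ne_zero.2 hK
  have mul_segment (c : ℝ≥0∞) : α * D + c * (D / (N + 1 : ℕ)) = (α + c / (N + 1 : ℕ)) * D := by
    simp only [div_eq_mul_inv]; ring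
  have hsegments : D ≤ (N + 1) * (D / (N + 1 : ℕ)) := by
    exact_mod_cast (ENNReal.mul_div_cancel hK₀ (ENNReal.natCast_ne_top _)).ge
  rcases hA.reaches_or_pivotPair hs hw hα (ENNReal.div_ne_top hD hK₀) walk hsegments with
    hgood | hpair
  · exact .inl ((hopDist_anti (by lia) u v).trans (hgood.trans (by gcongr; exact le_self_add)))
  · refine (hpair.reaches_or_pivots hw.comm hα hAB).imp (fun huv => ?_) fun ⟨p, hp, hup⟩ => ?_
    · exact huv.trans_eq (mul_segment 8)
    · exact ⟨p, hp, hup.trans ((mul_segment 6).trans_le (by gcongr))⟩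

theorem reachesOrPivots_of_pivotCover_univ
    (hB : PivotCover (graphDist w) (fun a b => w' a b ≤ graphDist w a b) Set.univ B) :
    ReachesOrPivots w w' B 1 1 := by
  intro u v m D walk
  refine (hB u trivial v trivial).imp (fun hlink => ?_) fun ⟨p, hp, hlink, hle⟩ => ⟨p, hp, ?_⟩
  · rw [one_mul]
    exact (hopDist_one_le w' u v).trans (hlink.trans walk.graphDist_le)
  · calc hopDist w' 1 u p ≤ D :=
          (hopDist_one_le w' u p).trans (hlink.trans (hle.trans walk.graphDist_le))
      _ ≤ 2 * D := le_mul_of_one_le_left' one_le_two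

theorem reachesOrPivots_level (hs : ∀ a b, w a b = w b a) (hw : IsAugmentation w w')
    {A : ℕ → Set V} (hA₀ : A 0 = Set.univ) {l K : ℕ} (hK : 8 * l ≤ K)
    (hA : ∀ i ≤ l, PivotCover (graphDist w) (fun a b => w' a b ≤ graphDist w a b)
      (A i) (A (i + 1))) {i : ℕ} (hi : i ≤ l) :
    ReachesOrPivots w w' (A (i + 1)) ((2 * (K + 1)) ^ i) (1 + (8 * i : ℕ) / K) := by
  induction i with
  | zero => simpa using reachesOrPivots_of_pivotCover_univ (hA₀ ▸ hA 0 hi)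
  | succ i ih =>
    have hstretch : 1 + ((8 * i : ℕ) : ℝ≥0∞) / K + 6 / K ≤ 2 := by
      rw [add_assoc, ← ENNReal.add_div, ← one_add_one_eq_two]
      gcongr
      refine ENNReal.div_le_of_le_mul ?_
      rw [one_mul]
      exact_mod_cast (by lia : 8 * i + 6 ≤ K)
    have hhops : (K + 1) * ((2 * (K + 1)) ^ i + 1) ≤ (2 * (K + 1)) ^ (i + 1) := by
      have : 1 ≤ (2 * (K + 1)) ^ i := Nat.one_le_pow _ _ (by lia)
      rw [pow_succ]
      nlinarith
    have hnext :=
      ((ih (by lia)).succ hs hw le_self_add (hA (i + 1) hi) (by lia) hstretch).mono hhops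
    rwa [add_assoc (1 : ℝ≥0∞), ← ENNReal.add_div,
      show ((8 * i : ℕ) : ℝ≥0∞) + 8 = (8 * (i + 1) : ℕ) by push_cast; ring] at hnext

theorem hopDist_le_of_pivotCover (hs : ∀ a b, w a b = w b a) (hw : IsAugmentation w w')
    {A : ℕ → Set V} {l K : ℕ} (hA₀ : A 0 = Set.univ) (hAl : A (l + 1) = ∅)
    (hA : ∀ i ≤ l, PivotCover (graphDist w) (fun a b => w' a b ≤ graphDist w a b)
      (A i) (A (i + 1)))
    (hK : 8 * l ≤ K) {ε : ℝ} (hε : 0 ≤ ε) (hKε : 8 * l ≤ ε * K) (u v : V) :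
    hopDist w' ((2 * (K + 1)) ^ l) u v ≤ ENNReal.ofReal (1 + ε) * graphDist w u v := by
  have hstretch : 1 + ((8 * l : ℕ) : ℝ≥0∞) / K ≤ ENNReal.ofReal (1 + ε) := by
    rw [ENNReal.ofReal_add zero_le_one hε, ENNReal.ofReal_one]
    gcongr
    refine ENNReal.div_le_of_le_mul ?_
    rw [← ENNReal.ofReal_natCast K, ← ENNReal.ofReal_mul hε, ← ENNReal.ofReal_natCast]
    exact ENNReal.ofReal_le_ofReal (by exact_mod_cast hKε)
  refine le_mul_graphDist (by simp; linarith) ENNReal.ofReal_ne_top fun m D walk => ?_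
  rcases reachesOrPivots_level hs hw hA₀ hK hA le_rfl walk with hreach | ⟨z, hz, -⟩
  · exact hreach.trans (by gcongr)
  · simp [hAl] at hz

end Levels

section Sampling

open scoped Finset

theorem exists_equiv_fin_forall_le {α ι : Type*} [Fintype α] [LinearOrder ι] (g : α → ι) :
    ∃ r : α ≃ Fin (Fintype.card α), ∀ x y, r x ≤ r y → g x ≤ g y := by
  let e := (Fintype.equivFin α).symm
  refine ⟨((Tuple.sort (g ∘ e)).trans e).symm, fun x y hxy => ?_⟩
  simpa using Tuple.monotone_sort (g ∘ e) hxy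

theorem card_filter_equiv_fin_lt {α : Type*} [Fintype α] {m : ℕ} (r : α ≃ Fin m) (v : α) :
    #{x | r x < r v} = (r v : ℕ) := by
  rw [← Fin.card_Iio (r v), ← Finset.card_map r.toEmbedding]
  congr 1
  ext j
  simp [Finset.mem_map_equiv]

theorem card_filter_forall_mem {α β : Type*} [Fintype α] [DecidableEq α] [Fintype β]
    [DecidableEq β] [Nonempty β] (X : Finset α) (T : Finset β) :
    (#{f : α → β | ∀ x ∈ X, f x ∈ T} : ℝ) =
      Fintype.card β ^ Fintype.card α * (#T / Fintype.card β) ^ #X := by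
  have hpi : ({f | ∀ x ∈ X, f x ∈ T} : Finset (α → β)) =
      Fintype.piFinset fun x => if x ∈ X then T else Finset.univ := by
    ext f
    simp only [Finset.mem_filter_univ, Fintype.mem_piFinset]
    exact forall_congr' fun x => by split_ifs with hx <;> simp [hx]
  have hfactor (x : α) : (#(if x ∈ X then T else Finset.univ) : ℝ) =
      Fintype.card β * if x ∈ X then (#T / Fintype.card β : ℝ) else 1 := by
    split_ifs
    · rw [mul_div_cancel₀ _ (Nat.cast_ne_zero.2 Fintype.card_ne_zero)]
    · simp
  simp only [hpi, Fintype.card_piFinset, Nat.cast_prod, hfactor, Finset.prod_mul_distrib,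
    Finset.prod_const, Finset.card_univ, Fintype.prod_ite_mem]

theorem geom_sum_one_sub_inv_le {x : ℝ} (hx : 1 ≤ x) (m : ℕ) :
    ∑ j ∈ Finset.range m, (1 - x⁻¹) ^ j ≤ x := by
  have hx₀ : 0 < x := zero_lt_one.trans_le hx
  have hpow : 0 ≤ (1 - x⁻¹) ^ m := pow_nonneg (sub_nonneg.2 (inv_le_one_of_one_le₀ hx)) m
  have hgeom := mul_neg_geom_sum (1 - x⁻¹) m
  rw [sub_sub_cancel, inv_mul_eq_div, div_eq_iff hx₀.ne'] at hgeom
  nlinarith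

variable {α : Type*} [Fintype α] {q m : ℕ} [NeZero q]

/-- The random sample of the hierarchy: for a uniformly random colouring `f` with `q` colours, each
point belongs to the class of colour `0` independently with probability `1 / q`. -/
def zeroClass (f : α → Fin q) : Finset α := {v | f v = 0}

/-- The edges joining `u` to the points that no point of `S` precedes in the ranking `r u`. -/
def bunchEdges (r : α → α → Fin m) (S : Finset α) : Finset (α × α) :=
  {e | ∀ x ∈ S, r e.1 e.2 ≤ r e.1 x}

theorem mem_bunchEdges {r : α → α → Fin m} {S : Finset α} {u v : α} :
    (u, v) ∈ bunchEdges r S ↔ ∀ x ∈ S, r u v ≤ r u x := by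
  simp [bunchEdges]

theorem pivotCover_bunchEdges {ι : Type*} [LE ι] {d : α → α → ι} {r : α → α → Fin m}
    (hr : ∀ u x y, r u x ≤ r u y → d u x ≤ d u y) (S : Finset α) :
    PivotCover d (fun u v => (u, v) ∈ bunchEdges r S) Set.univ S := by
  intro u _ v _
  refine or_iff_not_imp_left.2 fun huv => ?_
  obtain ⟨x, hx, hxv⟩ : ∃ x ∈ S, r u x < r u v := by simpa [mem_bunchEdges] using huv
  obtain ⟨p, hp, hmin⟩ := S.exists_min_image (r u) ⟨x, hx⟩
  exact ⟨p, hp, mem_bunchEdges.2 hmin, hr u p v ((hmin x hx).trans hxv.le)⟩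

theorem sum_card_zeroClass (α : Type*) [Fintype α] [DecidableEq α] (q : ℕ) [NeZero q] :
    ∑ f : α → Fin q, (#(zeroClass f) : ℝ) = q ^ Fintype.card α * (Fintype.card α / q) := by
  have hprob (v : α) : (#{f : α → Fin q | f v = 0} : ℝ) = q ^ Fintype.card α / q := by
    simpa [div_eq_mul_inv] using card_filter_forall_mem {v} {(0 : Fin q)}
  calc ∑ f : α → Fin q, (#(zeroClass f) : ℝ)
      = ∑ v : α, (#{f : α → Fin q | f v = 0} : ℝ) := by
        exact_mod_cast Finset.sum_card_bipartiteAbove_eq_sum_card_bipartiteBelow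
          (s := Finset.univ) (t := Finset.univ) fun (f : α → Fin q) v => f v = 0
    _ = q ^ Fintype.card α * (Fintype.card α / q) := by
        simp only [hprob, Finset.sum_const, Finset.card_univ, nsmul_eq_mul]
        ring

theorem card_filter_mem_bunchEdges_zeroClass [DecidableEq α] (r : α → α ≃ Fin m) (u v : α) :
    (#{f : α → Fin q | (u, v) ∈ bunchEdges (r · ·) (zeroClass f)} : ℝ) =
      q ^ Fintype.card α * (1 - (q : ℝ)⁻¹) ^ (r u v : ℕ) := by
  have hmem (f : α → Fin q) : (u, v) ∈ bunchEdges (r · ·) (zeroClass f) ↔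
      ∀ x ∈ ({x | r u x < r u v} : Finset α), f x ∈ ({0}ᶜ : Finset (Fin q)) := by
    simp only [mem_bunchEdges, zeroClass, Finset.mem_filter_univ, Finset.mem_compl,
      Finset.mem_singleton]
    exact forall_congr' fun x => by rw [← not_lt]; exact imp_not_comm
  have hq : (q : ℝ) ≠ 0 := Nat.cast_ne_zero.2 (NeZero.ne q)
  simp only [hmem, card_filter_forall_mem, card_filter_equiv_fin_lt, Finset.card_compl,
    Finset.card_singleton, Fintype.card_fin, Nat.cast_sub (Nat.one_le_iff_ne_zero.2 (NeZero.ne q)),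
    Nat.cast_one, sub_div, div_self hq, one_div]

theorem sum_card_bunchEdges_zeroClass_le [DecidableEq α] (r : α → α ≃ Fin m) :
    ∑ f : α → Fin q, (#(bunchEdges (r · ·) (zeroClass f)) : ℝ) ≤
      q ^ Fintype.card α * (Fintype.card α * q) := by
  have hq : (1 : ℝ) ≤ q := by exact_mod_cast NeZero.one_le
  have hbunch (u : α) : ∑ v, (1 - (q : ℝ)⁻¹) ^ (r u v : ℕ) ≤ q := by
    rw [Equiv.sum_comp (r u) fun j => (1 - (q : ℝ)⁻¹) ^ (j : ℕ),
      Fin.sum_univ_eq_sum_range fun j => (1 - (q : ℝ)⁻¹) ^ j]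
    exact geom_sum_one_sub_inv_le hq m
  calc ∑ f : α → Fin q, (#(bunchEdges (r · ·) (zeroClass f)) : ℝ)
      = ∑ e : α × α, (#{f : α → Fin q | e ∈ bunchEdges (r · ·) (zeroClass f)} : ℝ) := by
        have := Finset.sum_card_bipartiteAbove_eq_sum_card_bipartiteBelow
          (s := Finset.univ) (t := Finset.univ)
          fun (f : α → Fin q) e => e ∈ bunchEdges (r · ·) (zeroClass f)
        simp only [Finset.bipartiteAbove, Finset.bipartiteBelow, Finset.filter_univ_mem] at this
        exact_mod_cast this
    _ = q ^ Fintype.card α * ∑ u, ∑ v, (1 - (q : ℝ)⁻¹) ^ (r u v : ℕ) := by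
        simp only [card_filter_mem_bunchEdges_zeroClass, Fintype.sum_prod_type, Finset.mul_sum]
    _ ≤ q ^ Fintype.card α * ∑ _u : α, (q : ℝ) := by
        gcongr with u
        exact hbunch u
    _ = q ^ Fintype.card α * (Fintype.card α * q) := by simp

theorem exists_sample {ι : Type*} [LinearOrder ι] (d : α → α → ι) (q : ℕ) [NeZero q] :
    ∃ (S : Finset α) (E : Finset (α × α)), q ^ 2 * #S + #E ≤ 2 * Fintype.card α * q ∧
      PivotCover d (fun u v => (u, v) ∈ E) Set.univ S := by
  classical
  choose r hr using fun u => exists_equiv_fin_forall_le (d u)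
  suffices ∃ f ∈ (Finset.univ : Finset (α → Fin q)),
      (q : ℝ) ^ 2 * #(zeroClass f) + #(bunchEdges (r · ·) (zeroClass f)) ≤
        2 * Fintype.card α * q by
    obtain ⟨f, -, hf⟩ := this
    exact ⟨zeroClass f, _, by exact_mod_cast hf, pivotCover_bunchEdges hr _⟩
  refine Finset.exists_le_of_sum_le Finset.univ_nonempty ?_
  rw [Finset.sum_add_distrib, ← Finset.mul_sum, sum_card_zeroClass]
  simp only [Finset.sum_const, Finset.card_univ, Fintype.card_fun, Fintype.card_fin, nsmul_eq_mul,
    Nat.cast_pow]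
  have hq : (q : ℝ) ≠ 0 := Nat.cast_ne_zero.2 (NeZero.ne q)
  have hS : (q : ℝ) ^ 2 * (q ^ Fintype.card α * (Fintype.card α / q)) =
      q ^ Fintype.card α * (Fintype.card α * q) := by field_simp
  linarith [sum_card_bunchEdges_zeroClass_le (q := q) r]

theorem exists_sample_of_finset {V ι : Type*} [LinearOrder ι] (d : V → V → ι) (A : Finset V)
    (q : ℕ) [NeZero q] :
    ∃ (S : Finset V) (E : Finset (V × V)), q ^ 2 * #S + #E ≤ 2 * #A * q ∧
      PivotCover d (fun u v => (u, v) ∈ E) A S := by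
  obtain ⟨S, E, hcard, hcover⟩ := exists_sample (fun a b : A => d a b) q
  let incl := Function.Embedding.subtype (· ∈ A)
  refine ⟨S.map incl, E.map (incl.prodMap incl), by simpa using hcard, fun u hu v hv => ?_⟩
  refine (hcover ⟨u, hu⟩ trivial ⟨v, hv⟩ trivial).imp (Finset.mem_map_of_mem _) ?_
  rintro ⟨p, hp, hup, hle⟩
  exact ⟨p, Finset.mem_map_of_mem incl hp, Finset.mem_map_of_mem (incl.prodMap incl) hup, hle⟩

end Sampling

section LevelSizes

/-- The inverse sampling probability used to pass from level `i` to level `i + 1`. -/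
noncomputable def sampleRate (a : ℝ) (i : ℕ) : ℕ := 2 * ⌈a ^ 2 ^ i⌉₊

/-- The bounds produced by sampling at rates `sampleRate a i`, where `s i` is the size of level `i`
and `e i` is the number of edges added at that level. -/
def IsSampledSizes (a : ℝ) (s e : ℕ → ℕ) : Prop :=
  ∀ i, sampleRate a i ^ 2 * s (i + 1) + e i ≤ 2 * s i * sampleRate a i

variable {a : ℝ} {s e : ℕ → ℕ}

theorem one_lt_ceil_pow_two_pow (ha : 1 < a) (i : ℕ) : 1 < ⌈a ^ 2 ^ i⌉₊ :=
  Nat.lt_ceil.2 (by simpa using one_lt_pow₀ ha (Nat.two_pow_pos i).ne')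

theorem IsSampledSizes.ceil_mul_succ_le (hse : IsSampledSizes a s e) (ha : 1 < a) (i : ℕ) :
    ⌈a ^ 2 ^ i⌉₊ * s (i + 1) ≤ s i := by
  have hpos : 0 < 4 * ⌈a ^ 2 ^ i⌉₊ := by linarith [one_lt_ceil_pow_two_pow ha i]
  refine le_of_mul_le_mul_left ?_ hpos
  calc 4 * ⌈a ^ 2 ^ i⌉₊ * (⌈a ^ 2 ^ i⌉₊ * s (i + 1)) = sampleRate a i ^ 2 * s (i + 1) := by
        rw [sampleRate]; ring
    _ ≤ 2 * s i * sampleRate a i := (Nat.le_add_right _ _).trans (hse i)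
    _ = 4 * ⌈a ^ 2 ^ i⌉₊ * s i := by rw [sampleRate]; ring

theorem IsSampledSizes.mul_pow_le (hse : IsSampledSizes a s e) (ha : 1 < a) (i : ℕ) :
    s i * a ^ 2 ^ i ≤ s 0 * a := by
  induction i with
  | zero => simp
  | succ i ih =>
    have hstep : (⌈a ^ 2 ^ i⌉₊ : ℝ) * s (i + 1) ≤ s i := by
      exact_mod_cast hse.ceil_mul_succ_le ha i
    calc s (i + 1) * a ^ 2 ^ (i + 1) = a ^ 2 ^ i * s (i + 1) * a ^ 2 ^ i := by
          rw [pow_succ 2, mul_two, pow_add]; ring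
      _ ≤ ⌈a ^ 2 ^ i⌉₊ * s (i + 1) * a ^ 2 ^ i := by gcongr; exact Nat.le_ceil _
      _ ≤ s i * a ^ 2 ^ i := by gcongr
      _ ≤ s 0 * a := ih

theorem IsSampledSizes.two_pow_mul_le (hse : IsSampledSizes a s e) (ha : 1 < a) (i : ℕ) :
    2 ^ i * s i ≤ s 0 := by
  induction i with
  | zero => simp
  | succ i ih =>
    calc 2 ^ (i + 1) * s (i + 1) = 2 ^ i * (2 * s (i + 1)) := by ring
      _ ≤ 2 ^ i * (⌈a ^ 2 ^ i⌉₊ * s (i + 1)) := by gcongr; exact one_lt_ceil_pow_two_pow ha i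
      _ ≤ 2 ^ i * s i := by gcongr; exact hse.ceil_mul_succ_le ha i
      _ ≤ s 0 := ih

theorem IsSampledSizes.edges_le (hse : IsSampledSizes a s e) (ha : 1 < a) (i : ℕ) :
    e i ≤ 8 * (s 0 * a) := by
  have hpow : 1 < a ^ 2 ^ i := one_lt_pow₀ ha (Nat.two_pow_pos i).ne'
  have hceil : (⌈a ^ 2 ^ i⌉₊ : ℝ) ≤ 2 * a ^ 2 ^ i := by
    linarith [Nat.ceil_lt_add_one (zero_le_one.trans hpow.le)]
  calc (e i : ℝ) ≤ 2 * s i * sampleRate a i := by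
        exact_mod_cast (Nat.le_add_left _ _).trans (hse i)
    _ = 4 * (s i * ⌈a ^ 2 ^ i⌉₊) := by rw [sampleRate]; push_cast; ring
    _ ≤ 4 * (s i * (2 * a ^ 2 ^ i)) := by gcongr
    _ = 8 * (s i * a ^ 2 ^ i) := by ring
    _ ≤ 8 * (s 0 * a) := by linarith [hse.mul_pow_le ha i]

theorem IsSampledSizes.le_log_of_edges_ne_zero (hse : IsSampledSizes a s e) (ha : 1 < a) {i : ℕ}
    (hi : e i ≠ 0) : i ≤ Nat.log 2 (s 0) := by
  have hsi : s i ≠ 0 := by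
    intro hzero
    have := hse i
    rw [hzero] at this
    lia
  refine Nat.le_log_of_pow_le one_lt_two ?_
  exact (Nat.le_mul_of_pos_right _ (Nat.pos_of_ne_zero hsi)).trans (hse.two_pow_mul_le ha i)

theorem one_le_logb_two_natCast {n : ℕ} (hn : 2 ≤ n) : 1 ≤ Real.logb 2 n := by
  rw [Real.le_logb_iff_rpow_le one_lt_two (by positivity), Real.rpow_one]
  exact_mod_cast hn

theorem IsSampledSizes.sum_edges_le (hse : IsSampledSizes a s e) (ha : 1 < a) (hs : 2 ≤ s 0)
    (l : ℕ) : ∑ i ∈ Finset.range l, (e i : ℝ) ≤ 16 * (s 0 * a) * Real.logb 2 (s 0) := by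
  have hlog : (Nat.log 2 (s 0) : ℝ) ≤ Real.logb 2 (s 0) := by
    exact_mod_cast Real.natLog_le_logb (s 0) 2
  calc ∑ i ∈ Finset.range l, (e i : ℝ) ≤ ∑ i ∈ Finset.range (Nat.log 2 (s 0) + 1), (e i : ℝ) := by
        exact_mod_cast Finset.sum_le_sum_of_ne_zero fun i _ hi =>
          Finset.mem_range_succ_iff.2 (hse.le_log_of_edges_ne_zero ha hi)
    _ ≤ (Nat.log 2 (s 0) + 1) * (8 * (s 0 * a)) := by
        refine (Finset.sum_le_card_nsmul _ _ _ fun i _ => hse.edges_le ha i).trans_eq ?_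
        simp
    _ ≤ (2 * Real.logb 2 (s 0)) * (8 * (s 0 * a)) := by
        gcongr
        linarith [one_le_logb_two_natCast hs]
    _ = 16 * (s 0 * a) * Real.logb 2 (s 0) := by ring

theorem IsSampledSizes.sq_le (hse : IsSampledSizes a s e) (ha : 1 < a) {κ l : ℕ}
    (haκ : a ^ κ = s 0) (hl : κ + 1 ≤ 2 ^ (l + 1)) : (s l : ℝ) ^ 2 ≤ s 0 * a := by
  have hpos : 0 < s 0 * a := by rw [← haκ]; positivity
  have hrate : s 0 * a ≤ (a ^ 2 ^ l) ^ 2 := by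
    rw [← haκ, ← pow_succ, ← pow_mul, ← pow_succ]
    exact pow_le_pow_right₀ ha.le hl
  refine le_of_mul_le_mul_right ?_ hpos
  calc (s l : ℝ) ^ 2 * (s 0 * a) ≤ s l ^ 2 * (a ^ 2 ^ l) ^ 2 := by gcongr
    _ = (s l * a ^ 2 ^ l) ^ 2 := (mul_pow _ _ 2).symm
    _ ≤ (s 0 * a) ^ 2 := pow_le_pow_left₀ (by positivity) (hse.mul_pow_le ha l) 2
    _ = s 0 * a * (s 0 * a) := sq _

end LevelSizes

section Hierarchy

open scoped Finset

theorem exists_sampled_levels {V ι : Type*} [LinearOrder ι] (d : V → V → ι) (A₀ : Finset V)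
    {q : ℕ → ℕ} (hq : ∀ i, q i ≠ 0) :
    ∃ (A : ℕ → Finset V) (E : ℕ → Finset (V × V)), A 0 = A₀ ∧
      (∀ i, q i ^ 2 * #(A (i + 1)) + #(E i) ≤ 2 * #(A i) * q i) ∧
      ∀ i, PivotCover d (fun u v => (u, v) ∈ E i) (A i) (A (i + 1)) := by
  choose S E hcard hcover using fun (A : Finset V) (i : ℕ) =>
    haveI := NeZero.mk (hq i)
    exists_sample_of_finset d A (q i)
  let A (i : ℕ) : Finset V := Nat.rec A₀ (fun i B => S B i) i
  exact ⟨A, fun i => E (A i) i, rfl, fun i => hcard (A i) i, fun i => hcover (A i) i⟩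

theorem exists_truncated_levels {V ι : Type*} [LE ι] {d : V → V → ι} {A : ℕ → Finset V}
    {E : ℕ → Finset (V × V)}
    (hA : ∀ i, PivotCover d (fun u v => (u, v) ∈ E i) (A i) (A (i + 1))) (l : ℕ) :
    ∃ (B : ℕ → Finset V) (F : Finset (V × V)), B 0 = A 0 ∧ B (l + 1) = ∅ ∧
      #F ≤ ∑ i ∈ Finset.range l, #(E i) + #(A l) ^ 2 ∧
      ∀ i ≤ l, PivotCover d (fun u v => (u, v) ∈ F) (B i) (B (i + 1)) := by
  classical
  refine ⟨fun i => if i ≤ l then A i else ∅, (Finset.range l).biUnion E ∪ A l ×ˢ A l, by simp,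
    by simp, ?_, fun i hi => ?_⟩
  · rw [sq, ← Finset.card_product]
    exact (Finset.card_union_le _ _).trans (by gcongr; exact Finset.card_biUnion_le)
  · rcases hi.lt_or_eq with hlt | rfl
    · simp only [if_pos hi, if_pos (Nat.succ_le_of_lt hlt)]
      exact (hA i).mono fun u v huv => Finset.mem_union_left _ <|
        Finset.mem_biUnion.2 ⟨i, Finset.mem_range.2 hlt, huv⟩
    · simp only [if_pos le_rfl]
      exact fun u hu v hv => .inl (Finset.mem_union_right _ (Finset.mk_mem_product hu hv))

-- With `a = n ^ (1 / κ)`, level `i` has about `n * a ^ (1 - 2 ^ i)` vertices. Hence each level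
-- contributes `O(n * a)` edges, and so do all pairs of the last one.
theorem exists_levels_card_edges_le {V ι : Type*} [Fintype V] [LinearOrder ι] (d : V → V → ι)
    (hn : 2 ≤ Fintype.card V) {κ l : ℕ} (hκ : κ ≠ 0) (hl : κ + 1 ≤ 2 ^ (l + 1)) :
    ∃ (A : ℕ → Finset V) (E : Finset (V × V)), A 0 = Finset.univ ∧ A (l + 1) = ∅ ∧
      (#E : ℝ) ≤ 17 * (Fintype.card V : ℝ) ^ (1 + 1 / κ : ℝ) * Real.logb 2 (Fintype.card V) ∧
      ∀ i ≤ l, PivotCover d (fun u v => (u, v) ∈ E) (A i) (A (i + 1)) := by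
  have hn₁ : (1 : ℝ) < Fintype.card V := by exact_mod_cast hn
  have hn₀ : (0 : ℝ) < Fintype.card V := zero_lt_one.trans hn₁
  obtain ⟨a, ha⟩ : ∃ a : ℝ, a = (Fintype.card V : ℝ) ^ (1 / κ : ℝ) := ⟨_, rfl⟩
  have ha₁ : 1 < a := ha ▸ Real.one_lt_rpow hn₁ (by positivity)
  have haκ : a ^ κ = Fintype.card V := by
    rw [ha, one_div, Real.rpow_inv_natCast_pow hn₀.le hκ]
  obtain ⟨A, E, hA₀, hsizes, hcover⟩ := exists_sampled_levels d Finset.univ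
    (q := sampleRate a) fun i => by have := one_lt_ceil_pow_two_pow ha₁ i; rw [sampleRate]; lia
  obtain ⟨B, F, hB₀, hBl, hF, hcoverB⟩ := exists_truncated_levels hcover l
  refine ⟨B, F, hB₀.trans hA₀, hBl, ?_, hcoverB⟩
  have hse : IsSampledSizes a (fun i => #(A i)) (fun i => #(E i)) := hsizes
  have hs₀ : #(A 0) = Fintype.card V := by rw [hA₀, Finset.card_univ]
  have hsum := hse.sum_edges_le ha₁ (hs₀ ▸ hn) l
  have hlast := hse.sq_le ha₁ (by rw [haκ, hs₀]) hl
  simp only [hs₀] at hsum hlast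
  rw [Real.rpow_add hn₀, Real.rpow_one, ← ha]
  calc (#F : ℝ) ≤ ∑ i ∈ Finset.range l, (#(E i) : ℝ) + #(A l) ^ 2 := by exact_mod_cast hF
    _ ≤ 16 * (Fintype.card V * a) * Real.logb 2 (Fintype.card V) +
          Fintype.card V * a * Real.logb 2 (Fintype.card V) := by
        gcongr
        exact hlast.trans (le_mul_of_one_le_right (by positivity) (one_le_logb_two_natCast hn))
    _ = 17 * (Fintype.card V * a) * Real.logb 2 (Fintype.card V) := by ring

end Hierarchy

section Hopset

open scoped Finset

variable {V : Type*} {w : V → V → ℝ≥0∞}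

/-- `wH` encodes a `(1 + ε, β)`-hopset for the graph encoded by `w`. -/
def IsHopset (w wH : V → V → ℝ≥0∞) (ε : ℝ) (β : ℕ) : Prop :=
  ∀ u v, graphDist w u v ≤ hopDist (fun a b => min (w a b) (wH a b)) β u v ∧
    hopDist (fun a b => min (w a b) (wH a b)) β u v ≤ ENNReal.ofReal (1 + ε) * graphDist w u v

open Classical in
/-- The weight function of the shortcut edges `E`: each of them, read as an undirected edge, has the
length of the distance it spans. -/
noncomputable def shortcutWeight (w : V → V → ℝ≥0∞) (E : Finset (V × V)) (a b : V) : ℝ≥0∞ :=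
  if (a, b) ∈ E ∨ (b, a) ∈ E then graphDist w a b else ⊤

theorem shortcutWeight_comm (hs : ∀ a b, w a b = w b a) (E : Finset (V × V)) (a b : V) :
    shortcutWeight w E a b = shortcutWeight w E b a := by
  classical
  exact if_congr or_comm (graphDist_comm hs a b) rfl

theorem shortcutWeight_of_mem {E : Finset (V × V)} {a b : V} (hab : (a, b) ∈ E) :
    shortcutWeight w E a b = graphDist w a b :=
  if_pos (.inl hab)

theorem graphDist_le_shortcutWeight (w : V → V → ℝ≥0∞) (E : Finset (V × V)) (a b : V) :
    graphDist w a b ≤ shortcutWeight w E a b := by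
  rw [shortcutWeight]
  split_ifs
  exacts [le_rfl, le_top]

theorem ncard_shortcutWeight_ne_top_le (w : V → V → ℝ≥0∞) (E : Finset (V × V)) :
    Set.ncard {e : V × V | shortcutWeight w E e.1 e.2 ≠ ⊤} ≤ 2 * #E := by
  classical
  have hsub : {e : V × V | shortcutWeight w E e.1 e.2 ≠ ⊤} ⊆
      ↑(E ∪ E.image Prod.swap) := by
    rintro ⟨a, b⟩ he
    have hab : (a, b) ∈ E ∨ (b, a) ∈ E := by
      contrapose! he
      simp [shortcutWeight, he.1, he.2]
    simpa using hab
  calc Set.ncard {e : V × V | shortcutWeight w E e.1 e.2 ≠ ⊤} ≤ #(E ∪ E.image Prod.swap) := by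
        rw [← Set.ncard_coe_finset]; exact Set.ncard_le_ncard hsub (Finset.finite_toSet _)
    _ ≤ #E + #E := (Finset.card_union_le _ _).trans (Nat.add_le_add_left Finset.card_image_le _)
    _ = 2 * #E := (two_mul _).symm

theorem isAugmentation_shortcutWeight (hs : ∀ a b, w a b = w b a) (E : Finset (V × V)) :
    IsAugmentation w fun a b => min (w a b) (shortcutWeight w E a b) where
  comm a b := by rw [hs a b, shortcutWeight_comm hs E a b]
  graphDist_le a b := le_min (graphDist_le_weight w a b) (graphDist_le_shortcutWeight w E a b)
  le_weight _ _ := min_le_left _ _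

theorem exists_isHopset_card_le [Fintype V] (hs : ∀ a b, w a b = w b a)
    (hn : 2 ≤ Fintype.card V) {κ l : ℕ} (hκ : κ ≠ 0) (hl : κ + 1 ≤ 2 ^ (l + 1)) :
    ∃ wH : V → V → ℝ≥0∞, (∀ a b, wH a b = wH b a) ∧
      (Set.ncard {e : V × V | wH e.1 e.2 ≠ ⊤} : ℝ) ≤
        34 * (Fintype.card V : ℝ) ^ (1 + 1 / κ : ℝ) * Real.logb 2 (Fintype.card V) ∧
      ∀ {ε : ℝ} {K β : ℕ}, 0 ≤ ε → 8 * l ≤ K → 8 * l ≤ ε * K → (2 * (K + 1)) ^ l ≤ β →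
        IsHopset w wH ε β := by
  obtain ⟨A, E, hA₀, hAl, hcard, hcover⟩ :=
    exists_levels_card_edges_le (graphDist w) hn hκ hl
  have haug := isAugmentation_shortcutWeight hs E
  refine ⟨shortcutWeight w E, shortcutWeight_comm hs E, ?_, fun hε hK hKε hβ u v => ⟨?_, ?_⟩⟩
  · have hE : (Set.ncard {e : V × V | shortcutWeight w E e.1 e.2 ≠ ⊤} : ℝ) ≤ 2 * #E := by
      exact_mod_cast ncard_shortcutWeight_ne_top_le w E
    linarith
  · exact graphDist_le_hopDist_of_le haug.graphDist_le _ u v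
  · refine (hopDist_anti hβ u v).trans ?_
    refine hopDist_le_of_pivotCover hs haug (A := fun i => A i) (by simp [hA₀]) (by simp [hAl])
      (fun i hi => (hcover i hi).mono fun a b hab => ?_) hK hε hKε u v
    exact (min_le_right _ _).trans_eq (shortcutWeight_of_mem hab)

end Hopset

section Parameters

/-- The exponent `ℓ` of the hopbound; the hopset uses the levels `0, …, ℓ` of the hierarchy. -/
noncomputable def hopExponent (κ : ℕ) (ρ : ℝ) : ℕ :=
  ⌊Real.logb 2 (κ * ρ)⌋₊ + ⌈((κ : ℝ) + 1) / (κ * ρ)⌉₊ - 1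

variable {κ : ℕ} {ρ : ℝ}

theorem succ_le_two_pow_hopExponent_succ (hκρ : 1 ≤ κ * ρ) :
    κ + 1 ≤ 2 ^ (hopExponent κ ρ + 1) := by
  have hκρ₀ : 0 < κ * ρ := zero_lt_one.trans_le hκρ
  set f := ⌊Real.logb 2 (κ * ρ)⌋₊
  set m := ⌈((κ : ℝ) + 1) / (κ * ρ)⌉₊
  have hm₀ : 0 < m := Nat.ceil_pos.2 (by positivity)
  have hm_le : m ≤ 2 ^ (m - 1) := by have := Nat.lt_two_pow_self (n := m - 1); lia
  have hlt : κ * ρ < 2 ^ (f + 1) := by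
    have := Nat.lt_floor_add_one (Real.logb 2 (κ * ρ))
    rw [Real.logb_lt_iff_lt_rpow one_lt_two hκρ₀] at this
    exact_mod_cast this
  have hexp : hopExponent κ ρ + 1 = (m - 1) + (f + 1) := by rw [hopExponent]; lia
  have hreal : (κ : ℝ) + 1 ≤ 2 ^ (hopExponent κ ρ + 1) :=
    calc (κ : ℝ) + 1 ≤ m * (κ * ρ) := (div_le_iff₀ hκρ₀).1 (Nat.le_ceil _)
      _ ≤ 2 ^ (m - 1) * 2 ^ (f + 1) := by gcongr; exact_mod_cast hm_le
      _ = 2 ^ (hopExponent κ ρ + 1) := by rw [hexp, pow_add _ (m - 1)]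
  exact_mod_cast hreal

theorem one_le_logb_add_inv (hρ : 0 < ρ) (hκρ : 1 ≤ κ * ρ) :
    1 ≤ Real.logb 2 (κ * ρ) + 1 / ρ := by
  have hκ : (1 : ℝ) ≤ κ := by
    rw [Nat.one_le_cast, Nat.one_le_iff_ne_zero]
    rintro rfl
    norm_num at hκρ
  calc 1 ≤ Real.log ρ + ρ⁻¹ := by linarith [Real.one_sub_inv_le_log_of_pos hρ]
    _ ≤ Real.log (κ * ρ) + ρ⁻¹ := by gcongr; exact le_mul_of_one_le_left hρ.le hκ
    _ ≤ Real.logb 2 (κ * ρ) + 1 / ρ := by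
        rw [one_div]
        gcongr
        exact le_div_self (Real.log_nonneg hκρ) (Real.log_pos one_lt_two)
          (Real.log_two_lt_d9.le.trans (by norm_num))

theorem hopExponent_le (hρ : 0 < ρ) (hκρ : 1 ≤ κ * ρ) :
    hopExponent κ ρ ≤ 2 * (Real.logb 2 (κ * ρ) + 1 / ρ) := by
  have hκρ₀ : 0 < κ * ρ := zero_lt_one.trans_le hκρ
  have hfloor := Nat.floor_le (Real.logb_nonneg one_lt_two hκρ)
  have hsplit : ((κ : ℝ) + 1) / (κ * ρ) ≤ 1 / ρ + 1 := by
    rw [div_le_iff₀ hκρ₀, add_one_mul, one_div, inv_mul_eq_div, mul_div_cancel_right₀ _ hρ.ne']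
    gcongr
  have hceil := Nat.ceil_lt_add_one (a := ((κ : ℝ) + 1) / (κ * ρ)) (by positivity)
  have hexp : hopExponent κ ρ + 1 = ⌊Real.logb 2 (κ * ρ)⌋₊ + ⌈((κ : ℝ) + 1) / (κ * ρ)⌉₊ := by
    have : 0 < ⌈((κ : ℝ) + 1) / (κ * ρ)⌉₊ := Nat.ceil_pos.2 (by positivity)
    rw [hopExponent]
    lia
  rify at hexp
  linarith [one_le_logb_add_inv hρ hκρ]

theorem two_mul_ceil_hopExponent_div_succ_le (hρ : 0 < ρ) (hκρ : 1 ≤ κ * ρ) {ε : ℝ} (hε : 0 < ε)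
    (hε₁ : ε ≤ 1) :
    (2 * (⌈8 * hopExponent κ ρ / ε⌉₊ + 1) : ℝ) ≤ 36 * (Real.logb 2 (κ * ρ) + 1 / ρ) / ε := by
  have hceil := Nat.ceil_lt_add_one (a := 8 * hopExponent κ ρ / ε) (by positivity)
  calc (2 * (⌈8 * hopExponent κ ρ / ε⌉₊ + 1) : ℝ) ≤ (16 * hopExponent κ ρ + 4 * ε) / ε := by
        rw [add_div, mul_div_cancel_right₀ _ hε.ne', mul_div_assoc]
        rw [mul_div_assoc] at hceil ⊢
        linarith
    _ ≤ 36 * (Real.logb 2 (κ * ρ) + 1 / ρ) / ε := by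
        gcongr
        linarith [hopExponent_le hρ hκρ, one_le_logb_add_inv hρ hκρ]

theorem pow_le_ceil_pow_of_one_le {c L X ε : ℝ} (hc : 0 ≤ c) (hL : 1 ≤ L) (hX : 0 ≤ X) (hε : 0 ≤ ε)
    (ℓ : ℕ) : (c * X / ε) ^ ℓ ≤ ⌈(c * L ^ 2 * X / ε) ^ ℓ⌉₊ := by
  refine le_trans ?_ (Nat.le_ceil _)
  gcongr
  exact le_mul_of_one_le_right hc (one_le_pow₀ hL)

end Parameters

theorem aspect_ratio_free_hopset_existence_general {V : Type*} [Fintype V] {w : V → V → ℝ≥0∞}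
    (hs : ∀ a b, w a b = w b a) (hn : 2 ≤ Fintype.card V) {κ : ℕ} {ρ : ℝ} (hρ : 0 < ρ)
    (hκρ : 1 ≤ κ * ρ) :
    ∃ wH : V → V → ℝ≥0∞, (∀ a b, wH a b = wH b a) ∧
      (Set.ncard {e : V × V | wH e.1 e.2 ≠ ⊤} : ℝ) ≤
        34 * (Fintype.card V : ℝ) ^ (1 + 1 / κ : ℝ) * Real.logb 2 (Fintype.card V) ∧
      ∀ {ε : ℝ} {β : ℕ}, 0 < ε → ε ≤ 1 →
        (36 * (Real.logb 2 (κ * ρ) + 1 / ρ) / ε) ^ hopExponent κ ρ ≤ β → IsHopset w wH ε β := by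
  have hκ : κ ≠ 0 := by rintro rfl; norm_num at hκρ
  obtain ⟨wH, hsH, hcard, hopset⟩ :=
    exists_isHopset_card_le hs hn hκ (succ_le_two_pow_hopExponent_succ hκρ)
  refine ⟨wH, hsH, hcard, fun {ε β} hε hε₁ hβ => ?_⟩
  have hK : 8 * hopExponent κ ρ / ε ≤ ⌈8 * hopExponent κ ρ / ε⌉₊ := Nat.le_ceil _
  have hKε : 8 * hopExponent κ ρ ≤ ε * ⌈8 * hopExponent κ ρ / ε⌉₊ := (div_le_iff₀' hε).1 hK
  have hK' : (8 * hopExponent κ ρ : ℝ) ≤ ⌈8 * hopExponent κ ρ / ε⌉₊ :=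
    hKε.trans (mul_le_of_le_one_left (Nat.cast_nonneg _) hε₁)
  refine hopset hε.le (by exact_mod_cast hK') hKε ?_
  have hbase := pow_le_pow_left₀ (by positivity)
    (two_mul_ceil_hopExponent_div_succ_le hρ hκρ hε hε₁) (hopExponent κ ρ)
  exact_mod_cast hbase.trans hβ

/-- existence form of the aspect-ratio-free hopset theorem
(Theorem C.1, without the computational complexity claims). -/
theorem aspect_ratio_free_hopset_existence :
    ∃ c : ℝ, 0 < c ∧
      ∀ (V : Type) (_ : Fintype V) (w : V → V → ℝ≥0∞),
        (∀ a b, w a b = w b a) →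
        (∀ a b, a ≠ b → 0 < w a b) →
        (∀ a b, graphDist w a b < ⊤) →
        2 ≤ Fintype.card V →
        ∀ ε : ℝ, 0 < ε → ε < 1 / 2 →
        ∀ κ : ℕ, 2 ≤ κ →
        ∀ ρ : ℝ, 0 < ρ → ρ < 1 / 2 → 1 ≤ (κ : ℝ) * ρ →
        ∀ ℓ : ℕ,
          ℓ = ⌊Real.logb 2 ((κ : ℝ) * ρ)⌋₊ + ⌈((κ : ℝ) + 1) / ((κ : ℝ) * ρ)⌉₊ - 1 →
        ∀ β : ℕ,
          β = ⌈(c * (Real.logb 2 (Fintype.card V)) ^ 2 *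
                (Real.logb 2 ((κ : ℝ) * ρ) + 1 / ρ) / ε) ^ ℓ⌉₊ →
        ∃ wH : V → V → ℝ≥0∞,
          (Set.ncard {pr : V × V | wH pr.1 pr.2 ≠ ⊤} : ℝ) ≤
            c * (Fintype.card V : ℝ) ^ ((1 : ℝ) + 1 / (κ : ℝ)) *
              Real.logb 2 (Fintype.card V) ∧
          ∀ u v : V,
            graphDist w u v ≤
                hopDist (fun a b => min (w a b) (wH a b)) β u v ∧
              hopDist (fun a b => min (w a b) (wH a b)) β u v ≤
                ENNReal.ofReal (1 + ε) * graphDist w u v := by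
  refine ⟨36, by norm_num, fun V _ w hs _ _ hn ε hε hε₁ κ _ ρ hρ _ hκρ ℓ hℓ β hβ => ?_⟩
  subst hℓ hβ
  obtain ⟨wH, -, hcard, hopset⟩ := aspect_ratio_free_hopset_existence_general hs hn hρ hκρ
  have hlog : 1 ≤ Real.logb 2 (Fintype.card V) := one_le_logb_two_natCast hn
  have hX : 0 ≤ Real.logb 2 (κ * ρ) + 1 / ρ := zero_le_one.trans (one_le_logb_add_inv hρ hκρ)
  exact ⟨wH, hcard.trans (by gcongr; norm_num), hopset hε (by linarith)
    (pow_le_ceil_pow_of_one_le (by norm_num) hlog hX hε.le _)⟩
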